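/- Let Theta in {0,1}^{n x K} be a membership matrix (each row has exactly one 1) whose community sizes n_1, ..., n_K satisfy n_k >= c*n/K for all k, for a constant c > 0. Let B_{1,0}, ..., B_{L,0} in [0,1]^{K x K} be symmetric matrices such that the minimum eigenvalue of sum_{l=1}^L B_{l,0}^2 is at least c*L. Let rho > 0, P_l := rho*Theta*B_{l,0}*Theta^T, and Pi := (1/(L*n))*sum_{l=1}^L P_l^2. Then the K-th largest eigenvalue of Pi satisfies sigma_K(Pi) >= (c^3/K^2)*n*rho^2. -/

import Mathlib

open Matrix

/-- lower bound on the `K`-th largest eigenvalue of the population matrix `Π`,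
stated via the Courant–Fischer characterization: there is a `K`-dimensional subspace on which
the quadratic form of `Π` is at least `(c^3/K^2) * n * ρ^2` times the squared norm. -/
theorem stmt_17 {n K L : ℕ} (hn : 0 < n) (hK : 0 < K) (hL : 0 < L)
    (c : ℝ) (hc : 0 < c)
    (g : Fin n → Fin K)
    (Θ : Matrix (Fin n) (Fin K) ℝ)
    (hΘ : ∀ i k, Θ i k = if g i = k then 1 else 0)
    (hbal : ∀ k : Fin K, c * n / K ≤ (Finset.univ.filter (fun i => g i = k)).card)
    (B0 : Fin L → Matrix (Fin K) (Fin K) ℝ)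
    (hB0sym : ∀ l, (B0 l)ᵀ = B0 l)
    (hB0range : ∀ l a b, B0 l a b ∈ Set.Icc (0 : ℝ) 1)
    (hgap : ∀ x : Fin K → ℝ,
      c * L * (∑ a, x a ^ 2) ≤ x ⬝ᵥ (∑ l, B0 l * B0 l).mulVec x)
    (ρ : ℝ) (hρ : 0 < ρ)
    (P : Fin L → Matrix (Fin n) (Fin n) ℝ)
    (hP : ∀ l, P l = ρ • (Θ * B0 l * Θᵀ))
    (Pi : Matrix (Fin n) (Fin n) ℝ)
    (hPi : Pi = ((L : ℝ) * n)⁻¹ • ∑ l, P l * P l) :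
    ∃ V : Submodule ℝ (Fin n → ℝ), Module.finrank ℝ V = K ∧
      ∀ x ∈ V, (c ^ 3 / K ^ 2) * n * ρ ^ 2 * (∑ i, x i ^ 2) ≤ x ⬝ᵥ Pi.mulVec x := by
  classical
  set N : Fin K → ℝ := fun k => ((Finset.univ.filter (fun i => g i = k)).card : ℝ) with hN
  have hnR : (0 : ℝ) < n := by exact_mod_cast hn
  have hKR : (0 : ℝ) < K := by exact_mod_cast hK
  have hLR : (0 : ℝ) < L := by exact_mod_cast hL
  set m : ℝ := c * n / K with hm
  have hm0 : 0 < m := by positivity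
  have hNm : ∀ k, m ≤ N k := hbal
  have key : ∀ f : Fin K → ℝ, ∑ i, f (g i) = ∑ k, N k * f k := by
    intro f
    rw [← Finset.sum_fiberwise Finset.univ g (fun i => f (g i))]
    refine Finset.sum_congr rfl fun k _ => ?_
    rw [Finset.sum_congr rfl (g := fun _ => f k)]
    · simp [hN]
    · intro i hi
      rw [(Finset.mem_filter.mp hi).2]
  have hΘy : ∀ y : Fin K → ℝ, Θ *ᵥ y = fun i => y (g i) := by
    intro y
    ext i
    simp [mulVec, dotProduct, hΘ]
  have hΘt : ∀ y : Fin K → ℝ, Θᵀ *ᵥ (fun i => y (g i)) = fun k => N k * y k := by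
    intro y
    ext k
    have := key (fun j => (if j = k then 1 else 0) * y j)
    simp only [mulVec, dotProduct, transpose_apply, hΘ]
    rw [this]
    simp
  have hPx : ∀ l (y : Fin K → ℝ), P l *ᵥ (fun i => y (g i)) =
      fun i => ρ * (B0 l *ᵥ (fun k => N k * y k)) (g i) := by
    intro l y
    rw [hP, smul_mulVec, ← mulVec_mulVec, ← mulVec_mulVec, hΘt, hΘy]
    rfl
  have hPt : ∀ l, (P l)ᵀ = P l := by
    intro l
    rw [hP]
    simp [transpose_mul, hB0sym, Matrix.mul_assoc]
  have hBB : ∀ z : Fin K → ℝ, z ⬝ᵥ (∑ l, B0 l * B0 l) *ᵥ z =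
      ∑ l, ∑ k, (B0 l *ᵥ z) k ^ 2 := by
    intro z
    rw [sum_mulVec, dotProduct_sum]
    refine Finset.sum_congr rfl fun l _ => ?_
    rw [← mulVec_mulVec, dotProduct_mulVec, ← mulVec_transpose, hB0sym]
    simp [dotProduct, sq]
  have hPP : ∀ x : Fin n → ℝ, x ⬝ᵥ (∑ l, P l * P l) *ᵥ x =
      ∑ l, ∑ k, (P l *ᵥ x) k ^ 2 := by
    intro x
    rw [sum_mulVec, dotProduct_sum]
    refine Finset.sum_congr rfl fun l _ => ?_
    rw [← mulVec_mulVec, dotProduct_mulVec, ← mulVec_transpose, hPt]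
    simp [dotProduct, sq]
  refine ⟨LinearMap.range Θ.mulVecLin, ?_, ?_⟩
  · rw [LinearMap.finrank_range_of_inj]
    · simp
    · intro y y' h
      have h' : Θ *ᵥ y = Θ *ᵥ y' := h
      rw [hΘy, hΘy] at h'
      ext k
      have hpos : 0 < (Finset.univ.filter (fun i => g i = k)).card := by
        have : (0 : ℝ) < N k := hm0.trans_le (hNm k)
        exact Nat.cast_pos.mp this
      obtain ⟨i, hi⟩ := Finset.card_pos.mp hpos
      have := congrFun h' i
      simpa [(Finset.mem_filter.mp hi).2] using this
  · rintro x ⟨y, rfl⟩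
    rw [mulVecLin_apply, hΘy, hPi, smul_mulVec, dotProduct_smul, hPP]
    simp only [hPx]
    rw [key (fun k => y k ^ 2)]
    have h1 : ∀ l, ρ ^ 2 * m * ∑ k, (B0 l *ᵥ (fun k => N k * y k)) k ^ 2 ≤
        ∑ i, (ρ * (B0 l *ᵥ (fun k => N k * y k)) (g i)) ^ 2 := by
      intro l
      rw [key (fun k => (ρ * (B0 l *ᵥ (fun k => N k * y k)) k) ^ 2), Finset.mul_sum]
      refine Finset.sum_le_sum fun k _ => ?_
      have := mul_le_mul_of_nonneg_right (hNm k)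
        (sq_nonneg (ρ * (B0 l *ᵥ (fun k => N k * y k)) k))
      linarith [this]
    have h2 := hgap (fun k => N k * y k)
    rw [hBB] at h2
    have h3 : m * ∑ k, N k * y k ^ 2 ≤ ∑ k, (N k * y k) ^ 2 := by
      rw [Finset.mul_sum]
      refine Finset.sum_le_sum fun k _ => ?_
      have := mul_le_mul_of_nonneg_right (hNm k)
        (mul_nonneg (hm0.le.trans (hNm k)) (sq_nonneg (y k)))
      linarith [this]
    have h4 := Finset.sum_le_sum (s := Finset.univ) fun l _ => h1 l
    rw [← Finset.mul_sum] at h4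
    have h5 : ρ ^ 2 * m * (c * L * (m * ∑ k, N k * y k ^ 2)) ≤
        ∑ l, ∑ i, (ρ * (B0 l *ᵥ (fun k => N k * y k)) (g i)) ^ 2 := by
      refine le_trans ?_ h4
      refine mul_le_mul_of_nonneg_left ?_ (by positivity)
      exact le_trans (mul_le_mul_of_nonneg_left h3 (by positivity)) h2
    have h6 := mul_le_mul_of_nonneg_left h5 (show 0 ≤ ((L : ℝ) * n)⁻¹ by positivity)
    rw [smul_eq_mul]
    refine le_trans (le_of_eq ?_) h6
    rw [hm]
    field_simp
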